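/- Let K ≥ 3 and let a, b : ℤ/Kℤ → ℝ² be two closed polygons given by their cyclically ordered vertices. Define the shoelace area A(p) = (1/2)·Σ_{k ∈ ℤ/Kℤ} det(p_k, p_{k+1}). Then A(b) − A(a) = (1/4)·Σ_{k ∈ ℤ/Kℤ} det( (b_k − a_k) + (b_{k+1} − a_{k+1}) , (a_{k+1} − a_k) + (b_{k+1} − b_k) ), where det(u,v) = u₁v₂ − u₂v₁. -/

import Mathlib

/-- The two-dimensional determinant `det(u,v) = u₁v₂ − u₂v₁`. -/
def det2 (u v : ℝ × ℝ) : ℝ := u.1 * v.2 - u.2 * v.1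

/-!
For vertices `x, y` with successors `x', y'`, expand
`ω ((y - x) + (y' - x')) ((x' - x) + (y' - y))` for an alternating bilinear form `ω`. The terms
pairing index `k` with index `k + 1` combine to `2 (ω y y' - ω x x')`, the contribution of the edge
to the change of area. The remaining ones combine to `2 ω y' x' - 2 ω y x`, the increment along the
edge of a function of the vertex, and so cancel around the polygon.
-/

section BilinearForm

variable {R M N : Type*} [CommSemiring R] [AddCommGroup M] [Module R M]
  [AddCommGroup N] [Module R N]

theorem apply_sub_add_add_apply_add_sub (ω : M →ₗ[R] M →ₗ[R] N) (x y x' y' : M) :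
    ω (y - x) (x' + y') + ω (x + y) (y' - x') = 2 • (ω y y' - ω x x') := by
  simp only [map_add, map_sub, LinearMap.add_apply, LinearMap.sub_apply]
  abel

variable {ω : M →ₗ[R] M →ₗ[R] N}

theorem apply_sub_add_of_isAlt (hω : ω.IsAlt) (x y : M) : ω (y - x) (x + y) = 2 • ω y x := by
  have skew : ω x y = -ω y x := (hω.neg y x).symm
  simp only [map_add, map_sub, LinearMap.sub_apply, hω.self_eq_zero, skew]
  abel

theorem apply_edge_displacement_of_isAlt (hω : ω.IsAlt) (x y x' y' : M) :
    ω ((y - x) + (y' - x')) ((x' - x) + (y' - y)) =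
      2 • (ω y y' - ω x x') + (2 • ω y' x' - 2 • ω y x) := by
  have skew : ω (y' - x') (x + y) = -ω (x + y) (y' - x') := (hω.neg _ _).symm
  calc ω ((y - x) + (y' - x')) ((x' - x) + (y' - y))
      = ω ((y - x) + (y' - x')) ((x' + y') - (x + y)) := by rw [add_sub_add_comm]
    _ = (ω (y - x) (x' + y') + ω (x + y) (y' - x')) +
          (ω (y' - x') (x' + y') - ω (y - x) (x + y)) := by
        rw [map_sub, map_add ω, LinearMap.add_apply, LinearMap.add_apply, skew]
        abel
    _ = 2 • (ω y y' - ω x x') + (2 • ω y' x' - 2 • ω y x) := by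
        rw [apply_sub_add_add_apply_add_sub, apply_sub_add_of_isAlt hω, apply_sub_add_of_isAlt hω]

theorem shoelace_area_difference_general {ι : Type*} [Fintype ι] (hω : ω.IsAlt)
    (σ : Equiv.Perm ι) (a b : ι → M) :
    2 • (∑ k, ω (b k) (b (σ k)) - ∑ k, ω (a k) (a (σ k))) =
      ∑ k, ω ((b k - a k) + (b (σ k) - a (σ k))) ((a (σ k) - a k) + (b (σ k) - b k)) := by
  have cancel : ∑ k, (2 • ω (b (σ k)) (a (σ k)) - 2 • ω (b k) (a k)) = 0 := by
    rw [Finset.sum_sub_distrib, Equiv.sum_comp σ fun k => 2 • ω (b k) (a k), sub_self]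
  simp only [apply_edge_displacement_of_isAlt hω]
  rw [Finset.sum_add_distrib, cancel, add_zero, ← Finset.smul_sum, Finset.sum_sub_distrib]

end BilinearForm

/-- `det2` as a bilinear form on the plane, to which the identities for alternating forms apply. -/
def det2Form : LinearMap.BilinForm ℝ (ℝ × ℝ) :=
  LinearMap.mk₂ ℝ det2
    (fun u u' v => by simp only [det2, Prod.fst_add, Prod.snd_add]; ring)
    (fun c u v => by simp only [det2, Prod.smul_fst, Prod.smul_snd, smul_eq_mul]; ring)
    (fun u v v' => by simp only [det2, Prod.fst_add, Prod.snd_add]; ring)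
    (fun c u v => by simp only [det2, Prod.smul_fst, Prod.smul_snd, smul_eq_mul]; ring)

theorem det2Form_isAlt : det2Form.IsAlt := fun u => sub_eq_zero.mpr (mul_comm u.1 u.2)

/-- Planar instance of Lemma 3.2: for two closed polygons with cyclically
ordered vertices `a`, `b`, the difference of the shoelace areas equals
`(1/4) Σₖ det((bₖ−aₖ)+(bₖ₊₁−aₖ₊₁), (aₖ₊₁−aₖ)+(bₖ₊₁−bₖ))`. -/
theorem shoelace_area_difference (K : ℕ) (hK : 3 ≤ K) (a b : ZMod K → ℝ × ℝ) :
    haveI : NeZero K := ⟨by omega⟩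
    ((1:ℝ)/2) * ∑ k : ZMod K, det2 (b k) (b (k+1)) -
      ((1:ℝ)/2) * ∑ k : ZMod K, det2 (a k) (a (k+1))
    = ((1:ℝ)/4) * ∑ k : ZMod K,
        det2 ((b k - a k) + (b (k+1) - a (k+1)))
             ((a (k+1) - a k) + (b (k+1) - b k)) := by
  have : NeZero K := ⟨by omega⟩
  have key := shoelace_area_difference_general det2Form_isAlt (Equiv.addRight (1 : ZMod K)) a b
  simp only [det2Form, LinearMap.mk₂_apply, Equiv.coe_addRight, nsmul_eq_mul, Nat.cast_ofNat] at key
  linear_combination key / 4
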